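/- arXiv:1912.05562 — 5 statements merged into one kernel-verified Lean document; each statement's English description precedes it below -/
import Mathlib

section
/- Vector-valued Taylor remainder theorem (Proposition, based on the Ważewski–McLeod mean value theorem): Let E be a real normed vector space of finite dimension m ≥ 1, let n ∈ ℕ, and let F : ℝ → E be a function such that F and its derivatives F⁽¹⁾,…,F⁽ⁿ⁾ exist and are continuous on [0,1], and F⁽ⁿ⁺¹⁾ exists on (0,1). Then there exist points t₁,…,t_m ∈ (0,1) and nonnegative reals λ₁,…,λ_m with Σ_{l=1}^m λ_l = 1 such that F(1) − Σ_{k=0}^n F⁽ᵏ⁾(0)/k! = Σ_{l=1}^m λ_l · ((1−t_l)ⁿ/n!) · F⁽ⁿ⁺¹⁾(t_l). -/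
/-!
The derivative of `t ↦ ∑ k ≤ n, (1 - t) ^ k / k! • F⁽ᵏ⁾(t)` telescopes to
`(1 - t) ^ n / n! • F⁽ⁿ⁺¹⁾(t)`, so the claim is a mean value theorem: the slope of a vector-valued
function over an interval is a convex combination of `dim E` values of its derivative. By
separation the slope lies in the convex hull of the derivatives, and Carathéodory's theorem bounds
the number of values by `dim E + 1`. To save one more, suppose that `x` is interior to a simplex
whose vertices are values of the derivative, and divide the barycentric coordinates by those of
`x`: the regions where one of these quotients strictly dominates the others are disjoint open
convex sets, each containing a vertex. A form of Darboux's theorem says that the derivative cannot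
take values in two of them without leaving their union, so it takes a value `y` at which two
quotients tie for the maximum, and `y` can replace the two corresponding vertices.
-/

section

open Set Filter Topology Module

open scoped Finset

section ConvexlyPreconnected

variable {E : Type*} [AddCommGroup E] [Module ℝ E] [TopologicalSpace E] {s : Set E}

/-- A set is convexly preconnected if it lies in a single member of every family of pairwise
disjoint open convex sets that covers it. The derivative of a vector-valued function on an interval
has this property, although its range need not be preconnected. The family is
a set of sets, not an indexed family, to avoid a universe parameter. -/
def IsConvexlyPreconnected (s : Set E) : Prop :=
  ∀ 𝒰 : Set (Set E), (∀ U ∈ 𝒰, IsOpen U ∧ Convex ℝ U) → 𝒰.PairwiseDisjoint id → s ⊆ ⋃₀ 𝒰 →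
    ∀ U ∈ 𝒰, (s ∩ U).Nonempty → s ⊆ U

theorem isConvexlyPreconnected_of_isPreconnected (hs : IsPreconnected s) :
    IsConvexlyPreconnected s := by
  intro 𝒰 h𝒰 hdisj hcover U hU hsU
  refine hs.subset_left_of_subset_union (h𝒰 U hU).1
    (isOpen_sUnion fun V hV => (h𝒰 V hV.1).1 : IsOpen (⋃₀ (𝒰 \ {U}))) ?_ ?_ hsU
  · exact disjoint_sUnion_right.2 fun V hV => hdisj hU hV.1 (Ne.symm hV.2)
  · rwa [← sUnion_insert, insert_sdiff_singleton, insert_eq_of_mem hU]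

end ConvexlyPreconnected

section Darboux

theorem interval_induction_of_halving {P : ℝ → ℝ → Prop} {a b : ℝ} (hab : a < b)
    (halving : ∀ u v, a ≤ u → u < v → v ≤ b →
      (∀ t ∈ Icc u ((u + v) / 2), P t (t + (v - u) / 2)) → P u v)
    (straddle : ∀ p ∈ Icc a b, ∃ δ > 0, ∀ u v, a ≤ u → u ≤ p → p ≤ v → v ≤ b → u < v →
      v - u < δ → P u v) :
    P a b := by
  by_contra hP
  let Bad := {q : ℝ × ℝ // a ≤ q.1 ∧ q.1 < q.2 ∧ q.2 ≤ b ∧ ¬P q.1 q.2}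
  have exists_half (q : Bad) : ∃ r : Bad, q.1.1 ≤ r.1.1 ∧ r.1.2 ≤ q.1.2 ∧
      r.1.2 - r.1.1 = (q.1.2 - q.1.1) / 2 := by
    obtain ⟨⟨u, v⟩, hau, huv, hvb, hq⟩ := q
    have hfail := mt (halving u v hau huv hvb) hq
    push Not at hfail
    obtain ⟨t, ⟨hut, htv⟩, ht⟩ := hfail
    exact ⟨⟨(t, t + (v - u) / 2), by linarith, by linarith, by linarith, ht⟩, hut, by grind,
      by grind⟩
  choose half left_le_half half_le_right half_length using exists_half
  let I : ℕ → Bad := fun n => half^[n] ⟨(a, b), le_rfl, hab, le_rfl, hP⟩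
  have I_succ (n : ℕ) : I (n + 1) = half (I n) := Function.iterate_succ_apply' ..
  have I_length (n : ℕ) : (I n).1.2 - (I n).1.1 = (b - a) / 2 ^ n := by
    induction n with
    | zero => simp [I]
    | succ n ih => rw [I_succ, half_length, ih, pow_succ, div_div]
  have left_mono : Monotone fun n => (I n).1.1 :=
    monotone_nat_of_le_succ fun n => by rw [I_succ]; exact left_le_half _
  have right_anti : Antitone fun n => (I n).1.2 :=
    antitone_nat_of_succ_le fun n => by rw [I_succ]; exact half_le_right _
  obtain ⟨p, hp⟩ : ∃ p, ∀ n, p ∈ Icc (I n).1.1 (I n).1.2 :=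
    ⟨_, mem_iInter.1 (left_mono.ciSup_mem_iInter_Icc_of_antitone right_anti
      fun n => (I n).2.2.1.le)⟩
  obtain ⟨δ, hδ, hgood⟩ := straddle p (hp 0)
  have length_tendsto : Tendsto (fun n : ℕ => (b - a) / 2 ^ n) atTop (𝓝 0) :=
    tendsto_const_nhds.div_atTop (tendsto_pow_atTop_atTop_of_one_lt one_lt_two)
  obtain ⟨n, hn⟩ := (length_tendsto.eventually_lt_const hδ).exists
  obtain ⟨ha, hlt, hb, hbad⟩ := (I n).2
  exact hbad (hgood _ _ ha (hp n).1 (hp n).2 hb hlt (I_length n ▸ hn))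

variable {E : Type*}

theorem slope_mem_of_convex [AddCommGroup E] [Module ℝ E] {U : Set E} (hU : Convex ℝ U)
    {f : ℝ → E} {a b c : ℝ} (hab : a ≤ b) (hbc : b ≤ c) (hac : a < c)
    (hleft : slope f a b ∈ U) (hright : slope f b c ∈ U) : slope f a c ∈ U := by
  rw [← lineMap_slope_slope_sub_div_sub f a b c hac.ne]
  exact hU.lineMap_mem hleft hright
    ⟨div_nonneg (by linarith) (by linarith), div_le_one_of_le₀ (by linarith) (by linarith)⟩

variable [NormedAddCommGroup E] [NormedSpace ℝ E] {f f' : ℝ → E} {s : Set ℝ}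

theorem exists_pos_forall_slope_mem_of_hasDerivWithinAt {p : ℝ} {y : E} {U : Set E}
    (hf : HasDerivWithinAt f y s p) (hU : Convex ℝ U) (hyU : U ∈ 𝓝 y) :
    ∃ δ > 0, ∀ u ∈ s, ∀ v ∈ s, u ≤ p → p ≤ v → u < v → v - u < δ → slope f u v ∈ U := by
  obtain ⟨δ, hδ, hball⟩ :=
    Metric.mem_nhdsWithin_iff.1 (hasDerivWithinAt_iff_tendsto_slope.1 hf hyU)
  have slope_mem : ∀ x ∈ s, x ≠ p → |x - p| < δ → slope f p x ∈ U := fun x hxs hxp hx =>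
    hball ⟨by rwa [Metric.mem_ball, Real.dist_eq], hxs, hxp⟩
  refine ⟨δ, hδ, fun u hu v hv hup hpv huv hlen => ?_⟩
  rcases hup.eq_or_lt with rfl | hup
  · exact slope_mem v hv huv.ne' (by rwa [abs_of_pos (by linarith)])
  have hleft : slope f u p ∈ U :=
    slope_comm f p u ▸ slope_mem u hu hup.ne (by rw [abs_of_neg] <;> linarith)
  rcases hpv.eq_or_lt with rfl | hpv
  · exact hleft
  exact slope_mem_of_convex hU hup.le hpv.le huv hleft
    (slope_mem v hv hpv.ne' (by rw [abs_of_pos] <;> linarith))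

theorem isPreconnected_image_slope (hs : s.OrdConnected) (hf : ContinuousOn f s) :
    IsPreconnected ((fun q : ℝ × ℝ => slope f q.1 q.2) '' {q | q ∈ s ×ˢ s ∧ q.1 < q.2}) := by
  have hconvex : Convex ℝ {q : ℝ × ℝ | q ∈ s ×ˢ s ∧ q.1 < q.2} :=
    (hs.convex.prod hs.convex).inter <| convex_iff_forall_pos.2 fun _ hx _ hy _ _ ha hb _ =>
      add_lt_add (mul_lt_mul_of_pos_left hx ha) (mul_lt_mul_of_pos_left hy hb)
  refine hconvex.isPreconnected.image _ ?_
  simp only [slope_def_module]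
  refine ContinuousOn.smul (ContinuousOn.inv₀ (by fun_prop) fun q hq => (sub_pos.2 hq.2).ne') ?_
  exact (hf.comp continuousOn_snd fun q hq => hq.1.2).sub
    (hf.comp continuousOn_fst fun q hq => hq.1.1)

-- A window of half the length slides over `[u, v]`; its slopes stay in a single member of the
-- family, hence so does the average of the slopes over the two halves.
theorem slope_mem_sUnion_of_forall_half {𝒰 : Set (Set E)} (h𝒰 : ∀ U ∈ 𝒰, IsOpen U ∧ Convex ℝ U)
    (hdisj : 𝒰.PairwiseDisjoint id) {u v : ℝ} (huv : u < v) (hf : ContinuousOn f (Icc u v))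
    (hhalf : ∀ t ∈ Icc u ((u + v) / 2), slope f t (t + (v - u) / 2) ∈ ⋃₀ 𝒰) :
    slope f u v ∈ ⋃₀ 𝒰 := by
  set m := (u + v) / 2 with hm
  have hum : u ≤ m := by linarith
  have hmv : m ≤ v := by linarith
  have hwindow : ContinuousOn (fun t => slope f t (t + (v - u) / 2)) (Icc u m) := by
    simp only [slope_def_module, add_sub_cancel_left]
    refine ((hf.comp (by fun_prop) fun t ht => ?_).sub (hf.mono fun t ht => ?_)).const_smul _
    · exact ⟨by linarith [ht.1], by linarith [ht.2]⟩
    · exact ⟨ht.1, ht.2.trans hmv⟩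
  obtain ⟨U, hU, hleft⟩ := hhalf u ⟨le_rfl, hum⟩
  have hsubset := isConvexlyPreconnected_of_isPreconnected (isPreconnected_Icc.image _ hwindow)
    𝒰 h𝒰 hdisj (image_subset_iff.2 hhalf) U hU ⟨_, mem_image_of_mem _ ⟨le_rfl, hum⟩, hleft⟩
  have hright := hsubset (mem_image_of_mem _ ⟨hum, le_rfl⟩)
  refine ⟨U, hU, slope_mem_of_convex (h𝒰 U hU).2 hum hmv huv ?_ ?_⟩
  · rwa [show u + (v - u) / 2 = m by grind] at hleft
  · simpa only [show m + (v - u) / 2 = v by grind] using hright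

theorem slope_mem_sUnion_of_hasDerivWithinAt {𝒰 : Set (Set E)}
    (h𝒰 : ∀ U ∈ 𝒰, IsOpen U ∧ Convex ℝ U) (hdisj : 𝒰.PairwiseDisjoint id) {a b : ℝ} (hab : a < b)
    (hf : ∀ x ∈ Icc a b, HasDerivWithinAt f (f' x) (Icc a b) x)
    (hcover : f' '' Icc a b ⊆ ⋃₀ 𝒰) : slope f a b ∈ ⋃₀ 𝒰 := by
  refine interval_induction_of_halving (P := fun u v => slope f u v ∈ ⋃₀ 𝒰) hab ?_ ?_
  · intro u v hau huv hvb
    exact slope_mem_sUnion_of_forall_half h𝒰 hdisj huv fun x hx =>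
      ((hf x (Icc_subset_Icc hau hvb hx)).continuousWithinAt).mono (Icc_subset_Icc hau hvb)
  · intro p hp
    obtain ⟨U, hU, hpU⟩ := hcover (mem_image_of_mem f' hp)
    obtain ⟨δ, hδ, hslope⟩ := exists_pos_forall_slope_mem_of_hasDerivWithinAt (hf p hp)
      (h𝒰 U hU).2 ((h𝒰 U hU).1.mem_nhds hpU)
    exact ⟨δ, hδ, fun u v hau hup hpv hvb huv hlen => ⟨U, hU,
      hslope u ⟨hau, by linarith⟩ v ⟨by linarith, hvb⟩ hup hpv huv hlen⟩⟩

theorem mem_closure_image_slope_of_hasDerivWithinAt (hs : s.OrdConnected) (hne : s.Nontrivial)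
    {p : ℝ} (hp : p ∈ s) {y : E} (hf : HasDerivWithinAt f y s p) :
    y ∈ closure ((fun q : ℝ × ℝ => slope f q.1 q.2) '' {q | q ∈ s ×ˢ s ∧ q.1 < q.2}) := by
  have := accPt_principal_iff_nhdsWithin.1
    (hs.isPreconnected.preperfect_of_nontrivial hne p hp)
  refine mem_closure_of_tendsto (hasDerivWithinAt_iff_tendsto_slope.1 hf) ?_
  filter_upwards [self_mem_nhdsWithin] with x ⟨hxs, hxp⟩
  rcases lt_or_gt_of_ne hxp with hlt | hlt
  · exact ⟨(x, p), ⟨⟨hxs, hp⟩, hlt⟩, slope_comm f x p⟩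
  · exact ⟨(p, x), ⟨⟨hp, hxs⟩, hlt⟩, rfl⟩

theorem isConvexlyPreconnected_image_of_hasDerivWithinAt (hs : s.OrdConnected)
    (hf : ∀ x ∈ s, HasDerivWithinAt f (f' x) s x) : IsConvexlyPreconnected (f' '' s) := by
  rcases s.subsingleton_or_nontrivial with hsub | hne
  · exact isConvexlyPreconnected_of_isPreconnected (hsub.image f').isPreconnected
  intro 𝒰 h𝒰 hdisj hcover U hU ⟨_, ⟨p, hp, rfl⟩, hpU⟩
  rintro _ ⟨q, hq, rfl⟩
  let T := (fun r : ℝ × ℝ => slope f r.1 r.2) '' {r | r ∈ s ×ˢ s ∧ r.1 < r.2}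
  have mem_closure : ∀ x ∈ s, f' x ∈ closure T := fun x hx =>
    mem_closure_image_slope_of_hasDerivWithinAt hs hne hx (hf x hx)
  have hT : IsConvexlyPreconnected T := isConvexlyPreconnected_of_isPreconnected
    (isPreconnected_image_slope hs fun x hx => (hf x hx).continuousWithinAt)
  have hTcover : T ⊆ ⋃₀ 𝒰 := by
    rintro _ ⟨⟨u, v⟩, ⟨⟨hu, hv⟩, huv⟩, rfl⟩
    have huvs := hs.out hu hv
    exact slope_mem_sUnion_of_hasDerivWithinAt h𝒰 hdisj huv
      (fun x hx => (hf x (huvs hx)).mono huvs) ((image_mono huvs).trans hcover)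
  have subset_of_deriv_mem : ∀ V ∈ 𝒰, ∀ x ∈ s, f' x ∈ V → T ⊆ V := fun V hV x hx hxV =>
    hT 𝒰 h𝒰 hdisj hTcover V hV
      (by simpa only [inter_comm] using mem_closure_iff.1 (mem_closure x hx) V (h𝒰 V hV).1 hxV)
  obtain ⟨V, hV, hqV⟩ := hcover (mem_image_of_mem f' hq)
  have hUV : (U ∩ V).Nonempty := (closure_nonempty_iff.1 ⟨_, mem_closure p hp⟩).mono
    (subset_inter (subset_of_deriv_mem U hU p hp hpU) (subset_of_deriv_mem V hV q hq hqV))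
  rwa [hdisj.elim hU hV (not_disjoint_iff_nonempty_inter.2 hUV)]

end Darboux

section Separation

variable {E : Type*} [NormedAddCommGroup E] [NormedSpace ℝ E] [FiniteDimensional ℝ E] {C : Set E}

theorem exists_dual_ne_zero_forall_nonpos (hC : Convex ℝ C) (hne : C.Nonempty) (h0 : 0 ∉ C) :
    ∃ φ : StrongDual ℝ E, φ ≠ 0 ∧ ∀ y ∈ C, φ y ≤ 0 := by
  by_cases hspan : affineSpan ℝ C = ⊤
  · simpa using geometric_hahn_banach_of_nonempty_interior_point hC
      (fun h => h0 (interior_subset h)) (hC.interior_nonempty_iff_affineSpan_eq_top.2 hspan)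
  rw [AffineSubspace.affineSpan_eq_top_iff_vectorSpan_eq_top_of_nonempty _ _ _ hne] at hspan
  obtain ⟨φ, hφ0, hφ⟩ := Submodule.exists_le_ker_of_lt_top _ (lt_top_iff_ne_top.2 hspan)
  obtain ⟨y₀, hy₀⟩ := hne
  have hconst : ∀ y ∈ C, φ y = φ y₀ := fun y hy => by
    simpa [sub_eq_zero] using hφ (vsub_mem_vectorSpan ℝ hy hy₀)
  have hφ0' : LinearMap.toContinuousLinearMap φ ≠ 0 := by simpa using hφ0
  rcases le_total (φ y₀) 0 with hneg | hpos
  · exact ⟨φ.toContinuousLinearMap, hφ0', fun y hy => (hconst y hy).trans_le hneg⟩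
  · exact ⟨-φ.toContinuousLinearMap, neg_ne_zero.2 hφ0', fun y hy => by simpa [hconst y hy]⟩

theorem exists_dual_forall_nonpos_exists_neg (hC : Convex ℝ C) (hne : C.Nonempty) (h0 : 0 ∉ C) :
    ∃ φ : StrongDual ℝ E, (∀ y ∈ C, φ y ≤ 0) ∧ ∃ y ∈ C, φ y < 0 := by
  let W := Submodule.span ℝ C
  obtain ⟨y₀, hy₀⟩ := hne
  obtain ⟨φ, hφ0, hφ⟩ := exists_dual_ne_zero_forall_nonpos (hC.linear_preimage W.subtype)
    ⟨⟨y₀, Submodule.subset_span hy₀⟩, hy₀⟩ h0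
  obtain ⟨ψ, hψ⟩ := φ.toLinearMap.exists_extend
  have hψφ (y : W) : ψ y = φ y := LinearMap.congr_fun hψ y
  refine ⟨ψ.toContinuousLinearMap, fun y hy =>
    (hψφ ⟨y, Submodule.subset_span hy⟩).trans_le (hφ _ hy), ?_⟩
  by_contra! hnonneg
  have hker : W ≤ ψ.ker := Submodule.span_le.2 fun y hy =>
    ((hψφ ⟨y, Submodule.subset_span hy⟩).trans_le (hφ _ hy)).antisymm (hnonneg y hy)
  exact hφ0 (ContinuousLinearMap.ext fun y => (hψφ y).symm.trans (hker y.2))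

theorem exists_dual_forall_le_exists_lt (hC : Convex ℝ C) (hne : C.Nonempty) {x : E}
    (hx : x ∉ C) : ∃ φ : StrongDual ℝ E, (∀ y ∈ C, φ y ≤ φ x) ∧ ∃ y ∈ C, φ y < φ x := by
  obtain ⟨φ, hle, y, hy, hlt⟩ := exists_dual_forall_nonpos_exists_neg
    (hC.translate_preimage_right x) (C := (fun y => x + y) ⁻¹' C)
    (hne.preimage (Equiv.addLeft x).surjective) (by simpa using hx)
  exact ⟨φ, fun z hz => by simpa using hle (z - x) (by simpa using hz), x + y, hy, by simpa⟩

end Separation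

section MeanValue

variable {a b : ℝ}

theorem eq_slope_of_forall_deriv_le_slope {g g' : ℝ → ℝ} (hab : a < b)
    (hgc : ContinuousOn g (Icc a b)) (hg : ∀ t ∈ Ioo a b, HasDerivAt g (g' t) t)
    (hle : ∀ t ∈ Ioo a b, g' t ≤ slope g a b) : ∀ t ∈ Ioo a b, g' t = slope g a b := by
  intro t ht
  let h : ℝ → ℝ := fun u => g u - u * slope g a b
  have hderiv : ∀ u ∈ Ioo a b, HasDerivAt h (g' u - slope g a b) u := fun u hu => by
    simpa using! (hg u hu).sub ((hasDerivAt_id u).mul_const (slope g a b))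
  have hanti : AntitoneOn h (Icc a b) := by
    refine antitoneOn_of_hasDerivWithinAt_nonpos (convex_Icc a b) (hgc.sub (by fun_prop))
      (f' := fun u => g' u - slope g a b) ?_ ?_ <;> rw [interior_Icc]
    · exact fun u hu => (hderiv u hu).hasDerivWithinAt
    · exact fun u hu => sub_nonpos.2 (hle u hu)
  have hends : h a = h b := by
    have := sub_smul_slope g a b
    simp only [smul_eq_mul, vsub_eq_sub, h] at this ⊢
    linarith
  have hconst : h =ᶠ[𝓝 t] fun _ => h a := by
    filter_upwards [isOpen_Ioo.mem_nhds ht] with u hu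
    have hu' := Ioo_subset_Icc_self hu
    exact (hanti (left_mem_Icc.2 hab.le) hu' hu.1.le).antisymm
      (hends ▸ hanti hu' (right_mem_Icc.2 hab.le) hu.2.le)
  exact sub_eq_zero.1 <|
    (hderiv t ht).unique ((hasDerivAt_const t (h a)).congr_of_eventuallyEq hconst)

variable {E : Type*} [NormedAddCommGroup E] [NormedSpace ℝ E] [FiniteDimensional ℝ E]
  {f f' : ℝ → E}

theorem slope_mem_convexHull_image_deriv (hab : a < b) (hfc : ContinuousOn f (Icc a b))
    (hf : ∀ t ∈ Ioo a b, HasDerivAt f (f' t) t) :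
    slope f a b ∈ convexHull ℝ (f' '' Ioo a b) := by
  by_contra hslope
  obtain ⟨φ, hle, y, hy, hlt⟩ := exists_dual_forall_le_exists_lt (convex_convexHull ℝ _)
    ((nonempty_Ioo.2 hab).image f').convexHull hslope
  have hφslope : slope (φ ∘ f) a b = φ (slope f a b) := φ.toLinearMap.slope_comp f a b
  have hderiv_eq : ∀ t ∈ Ioo a b, φ (f' t) = φ (slope f a b) := by
    rw [← hφslope]
    refine eq_slope_of_forall_deriv_le_slope hab (φ.continuous.comp_continuousOn hfc)
      (fun t ht => φ.hasFDerivAt.comp_hasDerivAt t (hf t ht)) fun t ht => ?_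
    exact hφslope ▸ hle _ (subset_convexHull ℝ _ (mem_image_of_mem f' ht))
  have hhull : convexHull ℝ (f' '' Ioo a b) ⊆ {z | φ z = φ (slope f a b)} :=
    convexHull_min (image_subset_iff.2 hderiv_eq) (convex_hyperplane φ.toLinearMap.isLinear _)
  exact hlt.ne (hhull hy)

end MeanValue

section DominanceRegion

/-- The region where the `i`-th function of the family `g` strictly dominates all the others. For
affine functions these regions form a disjoint family of convex sets, to which
`IsConvexlyPreconnected` is applied. -/
def dominanceRegion {ι X R : Type*} [Preorder R] (g : ι → X → R) (i : ι) : Set X :=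
  ⋂ j ≠ i, {x | g j x < g i x}

variable {ι X R : Type*}

theorem pairwise_disjoint_dominanceRegion [Preorder R] (g : ι → X → R) :
    Pairwise (Function.onFun Disjoint (dominanceRegion g)) := by
  refine fun i j hij => disjoint_left.2 fun y hi hj => ?_
  have hji : g j y < g i y := mem_iInter₂.1 hi j hij.symm
  have hij : g i y < g j y := mem_iInter₂.1 hj i hij
  exact hji.asymm hij

theorem exists_tie_of_notMem_dominanceRegion [Finite ι] [Nonempty ι] [LinearOrder R]
    {g : ι → X → R} {y : X} (hy : ∀ i, y ∉ dominanceRegion g i) :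
    ∃ i k, i ≠ k ∧ g i y = g k y ∧ ∀ j, g j y ≤ g i y := by
  obtain ⟨i, hi⟩ := Finite.exists_max fun i => g i y
  obtain ⟨k, hk, hik⟩ : ∃ k ≠ i, g i y ≤ g k y := by
    simpa [dominanceRegion] using hy i
  exact ⟨i, k, hk.symm, hik.antisymm (hi k), hi⟩

theorem isOpen_dominanceRegion [Finite ι] [TopologicalSpace X] [TopologicalSpace R] [LinearOrder R]
    [OrderClosedTopology R] {g : ι → X → R} (hg : ∀ i, Continuous (g i)) (i : ι) :
    IsOpen (dominanceRegion g i) :=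
  isOpen_iInter_of_finite fun j => isOpen_iInter_of_finite fun _ => isOpen_lt (hg j) (hg i)

variable {E : Type*} [AddCommGroup E] [Module ℝ E]

theorem convex_dominanceRegion (g : ι → E →ᵃ[ℝ] ℝ) (i : ι) :
    Convex ℝ (dominanceRegion (fun j => g j) i) :=
  convex_iInter₂ fun j _ => by
    simpa [preimage] using (convex_Iio (0 : ℝ)).affine_preimage (g j - g i)

theorem IsConvexlyPreconnected.exists_notMem_dominanceRegion [Finite ι] [TopologicalSpace E]
    {s : Set E} (hs : IsConvexlyPreconnected s) {g : ι → E →ᵃ[ℝ] ℝ} (hg : ∀ i, Continuous (g i))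
    {i k : ι} (hik : i ≠ k) (hi : (s ∩ dominanceRegion (fun j => g j) i).Nonempty)
    (hk : (s ∩ dominanceRegion (fun j => g j) k).Nonempty) :
    ∃ y ∈ s, ∀ j, y ∉ dominanceRegion (fun j => g j) j := by
  by_contra! hcover
  have hdisj := pairwise_disjoint_dominanceRegion fun j => (g j : E → ℝ)
  have hsubset : s ⊆ dominanceRegion (fun j => g j) i := by
    refine hs (range (dominanceRegion fun j => g j)) ?_ hdisj.range_pairwise ?_ _
      (mem_range_self i) hi
    · exact forall_mem_range.2 fun j => ⟨isOpen_dominanceRegion hg j, convex_dominanceRegion g j⟩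
    · rwa [sUnion_range, subset_def, forall₂_congr fun _ _ => mem_iUnion]
  obtain ⟨y, hys, hyk⟩ := hk
  exact disjoint_left.1 (hdisj hik) (hsubset hys) hyk

end DominanceRegion

section Caratheodory

section Module

variable {ι E : Type*} [AddCommGroup E] [Module ℝ E]

theorem exists_nonneg_forall_mul_le_of_forall_div_le [Fintype ι] {w c : ι → ℝ}
    (hw : ∀ j, 0 < w j) (hw₁ : ∑ j, w j = 1) (hc₁ : ∑ j, c j = 1) {i : ι}
    (hmax : ∀ j, c j / w j ≤ c i / w i) :
    ∃ ρ : ℝ, 0 ≤ ρ ∧ (∀ j, ρ * c j ≤ w j) ∧ ∀ j, c j / w j = c i / w i → ρ * c j = w j := by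
  have hc_le (j : ι) : c j ≤ c i / w i * w j := (div_le_iff₀ (hw j)).1 (hmax j)
  have one_le : 1 ≤ c i / w i := by
    calc 1 = ∑ j, c j := hc₁.symm
      _ ≤ ∑ j, c i / w i * w j := Finset.sum_le_sum fun j _ => hc_le j
      _ = c i / w i := by rw [← Finset.mul_sum, hw₁, mul_one]
  have hpos : 0 < c i / w i := zero_lt_one.trans_le one_le
  refine ⟨(c i / w i)⁻¹, inv_nonneg.2 hpos.le, fun j => (inv_mul_le_iff₀ hpos).2 (hc_le j),
    fun j hj => (inv_mul_eq_iff_eq_mul₀ hpos.ne').2 ((div_eq_iff (hw j).ne').1 hj)⟩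

theorem sum_smul_mem_convexHull_insert_image [Fintype ι] {z : ι → E} {w c : ι → ℝ} {y : E} {ρ : ℝ}
    (hw₁ : ∑ j, w j = 1) (hc₁ : ∑ j, c j = 1) (hc : ∑ j, c j • z j = y) (hρ₀ : 0 ≤ ρ)
    (hρ : ∀ j, ρ * c j ≤ w j) :
    ∑ j, w j • z j ∈ convexHull ℝ (insert y (z '' {j | ρ * c j ≠ w j})) := by
  let v : Option ι → ℝ := fun o => o.elim ρ fun j => w j - ρ * c j
  let p : Option ι → E := fun o => o.elim y z
  have hv₁ : ∑ o, v o = 1 := by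
    simp [v, Fintype.sum_option, Finset.sum_sub_distrib, ← Finset.mul_sum, hw₁, hc₁]
  have hvp : ∑ o, v o • p o = ∑ j, w j • z j := by
    simp [v, p, Fintype.sum_option, sub_smul, mul_smul, Finset.sum_sub_distrib,
      ← Finset.smul_sum, hc]
  rw [← hvp, ← finsum_eq_sum_of_fintype]
  refine (convex_convexHull ℝ _).finsum_mem (fun o => ?_)
    ((finsum_eq_sum_of_fintype v).trans hv₁) fun o ho => subset_convexHull ℝ _ ?_
  · cases o with
    | none => exact hρ₀
    | some j => exact sub_nonneg.2 (hρ j)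
  · cases o with
    | none => exact mem_insert _ _
    | some j => exact mem_insert_of_mem _ (mem_image_of_mem z (sub_ne_zero.1 ho).symm)

theorem exists_finset_card_lt_mem_convexHull_of_tie [Fintype ι] {z : ι → E} {w c : ι → ℝ} {y : E}
    (hw : ∀ j, 0 < w j) (hw₁ : ∑ j, w j = 1) (hc₁ : ∑ j, c j = 1) (hc : ∑ j, c j • z j = y)
    {i k : ι} (hik : i ≠ k) (hmax : ∀ j, c j / w j ≤ c i / w i) (htie : c i / w i = c k / w k) :
    ∃ T : Finset E, ↑T ⊆ insert y (range z) ∧ #T < Fintype.card ι ∧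
      ∑ j, w j • z j ∈ convexHull ℝ (T : Set E) := by
  classical
  obtain ⟨ρ, hρ₀, hρ, hρtie⟩ := exists_nonneg_forall_mul_le_of_forall_div_le hw hw₁ hc₁ hmax
  let J := Finset.univ.filter fun j => ρ * c j ≠ w j
  have hJ : J ⊆ ({i, k} : Finset ι)ᶜ := fun j hj => by
    have hj := (Finset.mem_filter.1 hj).2
    simp only [Finset.mem_compl, Finset.mem_insert, Finset.mem_singleton]
    rintro (rfl | rfl)
    exacts [hj (hρtie _ rfl), hj (hρtie _ htie.symm)]
  refine ⟨insert y (J.image z), ?_, ?_, ?_⟩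
  · rw [Finset.coe_insert, Finset.coe_image]
    exact insert_subset_insert (image_subset_range _ _)
  · calc #(insert y (J.image z)) ≤ #J + 1 :=
          (Finset.card_insert_le _ _).trans (Nat.succ_le_succ Finset.card_image_le)
      _ ≤ #({i, k} : Finset ι)ᶜ + 1 := Nat.succ_le_succ (Finset.card_le_card hJ)
      _ < #({i, k} : Finset ι)ᶜ + 2 := Nat.lt_succ_self _
      _ = Fintype.card ι := by rw [← Finset.card_pair hik, Finset.card_compl_add_card]
  · simpa [J] using sum_smul_mem_convexHull_insert_image hw₁ hc₁ hc hρ₀ hρ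

theorem exists_mem_stdSimplex_sum_smul_eq {T : Finset E} {x : E}
    (hx : x ∈ convexHull ℝ (T : Set E)) {m : ℕ} (hT : #T ≤ m) :
    ∃ z : Fin m → E, (∀ l, z l ∈ T) ∧ ∃ w ∈ stdSimplex ℝ (Fin m), ∑ l, w l • z l = x := by
  obtain ⟨y, hy⟩ : T.Nonempty := by simpa using convexHull_nonempty_iff.1 ⟨x, hx⟩
  obtain ⟨w, hw₀, hw₁, rfl⟩ := Finset.mem_convexHull'.1 hx
  obtain ⟨e⟩ : Nonempty (T ↪ Fin m) := Function.Embedding.nonempty_of_card_le (by simpa using hT)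
  let z := Function.extend e Subtype.val fun _ => y
  let w' := Function.extend e (fun q => w q) 0
  have hz (q : T) : z (e q) = q := e.injective.extend_apply ..
  have hw (q : T) : w' (e q) = w q := e.injective.extend_apply ..
  have hw' : ∀ l ∉ range e, w' l = 0 := fun l hl => Function.extend_apply' _ _ l hl
  refine ⟨z, fun l => ?_, w', ⟨fun l => ?_, ?_⟩, ?_⟩
  · by_cases hl : l ∈ range e
    · obtain ⟨q, rfl⟩ := hl
      exact hz q ▸ q.2
    · rwa [show z l = y from Function.extend_apply' _ _ l hl]
  · by_cases hl : l ∈ range e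
    · obtain ⟨q, rfl⟩ := hl
      exact hw q ▸ hw₀ q q.2
    · exact (hw' l hl).ge
  · rw [← hw₁, ← Finset.sum_coe_sort T w]
    exact (Fintype.sum_of_injective e e.injective _ _ hw' fun q => (hw q).symm).symm
  · rw [← Finset.sum_coe_sort T fun q => w q • q]
    exact (Fintype.sum_of_injective e e.injective _ _ (fun l hl => by rw [hw' l hl, zero_smul])
      fun q => by rw [hw, hz]).symm

end Module

variable {E : Type*} [NormedAddCommGroup E] [NormedSpace ℝ E] [FiniteDimensional ℝ E]

theorem IsConvexlyPreconnected.exists_finset_card_le_finrank_mem_convexHull [Nontrivial E]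
    {s : Set E} (hs : IsConvexlyPreconnected s) {x : E} (hx : x ∈ convexHull ℝ s) :
    ∃ T : Finset E, ↑T ⊆ s ∧ #T ≤ finrank ℝ E ∧ x ∈ convexHull ℝ (T : Set E) := by
  classical
  obtain ⟨ι, _, z, w, hzs, hz, hw, hw₁, rfl⟩ := eq_pos_convex_span_of_mem_convexHull hx
  rcases le_or_gt (Fintype.card ι) (finrank ℝ E) with hcard | hcard
  · refine ⟨Finset.univ.image z, by simpa using hzs, Finset.card_image_le.trans hcard, ?_⟩
    exact mem_convexHull_of_exists_fintype w z (fun i => (hw i).le) hw₁ (by simp) rfl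
  have hcard : Fintype.card ι = finrank ℝ E + 1 :=
    (hz.card_le_finrank_succ.trans (Nat.succ_le_succ (Submodule.finrank_le _))).antisymm hcard
  let B : AffineBasis ι ℝ E := ⟨z, hz, hz.affineSpan_eq_top_iff_card_eq_finrank_add_one.2 hcard⟩
  let g : ι → E →ᵃ[ℝ] ℝ := fun i => (w i)⁻¹ • B.coord i
  have vertex_mem (i : ι) : (s ∩ dominanceRegion (fun j => g j) i).Nonempty := by
    refine ⟨z i, hzs (mem_range_self i), mem_iInter₂.2 fun j hj => ?_⟩
    have hi : B.coord i (z i) = 1 := B.coord_apply_eq i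
    have hji : B.coord j (z i) = 0 := B.coord_apply_ne hj
    simp [g, hi, hji, hw i]
  have : Nontrivial ι := Fintype.one_lt_card_iff_nontrivial.1
    (hcard ▸ Nat.succ_lt_succ (finrank_pos (R := ℝ) (M := E)))
  obtain ⟨i, k, hik⟩ := exists_pair_ne ι
  obtain ⟨y, hys, hy⟩ :=
    hs.exists_notMem_dominanceRegion (fun j => (g j).continuous_of_finiteDimensional) hik
      (vertex_mem i) (vertex_mem k)
  obtain ⟨i, k, hik, htie, hmax⟩ := exists_tie_of_notMem_dominanceRegion hy
  simp only [g, AffineMap.coe_smul, Pi.smul_apply, smul_eq_mul, ← div_eq_inv_mul] at htie hmax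
  obtain ⟨T, hT, hTcard, hxT⟩ := exists_finset_card_lt_mem_convexHull_of_tie hw hw₁
    (B.sum_coord_apply_eq_one y) (B.linear_combination_coord_eq_self y) hik hmax htie
  exact ⟨T, hT.trans (insert_subset hys hzs), by omega, hxT⟩

end Caratheodory

section MeanValueSum

variable {E : Type*} [NormedAddCommGroup E] [NormedSpace ℝ E] [FiniteDimensional ℝ E]
  {f f' : ℝ → E} {a b : ℝ}

theorem exists_slope_eq_sum_smul_deriv [Nontrivial E] (hab : a < b)
    (hfc : ContinuousOn f (Icc a b)) (hf : ∀ t ∈ Ioo a b, HasDerivAt f (f' t) t) :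
    ∃ t : Fin (finrank ℝ E) → ℝ, (∀ l, t l ∈ Ioo a b) ∧
      ∃ w ∈ stdSimplex ℝ (Fin (finrank ℝ E)), slope f a b = ∑ l, w l • f' (t l) := by
  have hpre : IsConvexlyPreconnected (f' '' Ioo a b) :=
    isConvexlyPreconnected_image_of_hasDerivWithinAt ordConnected_Ioo
      fun t ht => (hf t ht).hasDerivWithinAt
  obtain ⟨T, hT, hcard, hslope⟩ := hpre.exists_finset_card_le_finrank_mem_convexHull
    (slope_mem_convexHull_image_deriv hab hfc hf)
  obtain ⟨z, hz, w, hw, hsum⟩ := exists_mem_stdSimplex_sum_smul_eq hslope hcard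
  choose t ht htz using fun l => hT (hz l)
  exact ⟨t, ht, w, hw, by simp only [htz, hsum]⟩

end MeanValueSum

end

/-- **Vector-valued Taylor remainder theorem** (Ważewski–McLeod form): if `F : ℝ → E` with
`E` a real normed space of finite dimension `m ≥ 1` is `n` times continuously differentiable
on `[0,1]` and its `n`-th derivative is differentiable on `(0,1)`, then the `n`-th Taylor
remainder at `1` is a convex combination of `m` Lagrange-type remainder terms. -/
theorem vector_valued_taylor_remainder (E : Type*) [NormedAddCommGroup E] [NormedSpace ℝ E]
    [FiniteDimensional ℝ E] (m : ℕ) (hm : 1 ≤ m) (hdim : Module.finrank ℝ E = m)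
    (n : ℕ) (F : ℝ → E)
    (hF : ContDiffOn ℝ n F (Set.Icc 0 1))
    (hF' : DifferentiableOn ℝ (iteratedDerivWithin n F (Set.Icc 0 1)) (Set.Ioo 0 1)) :
    ∃ (t : Fin m → ℝ) (lam : Fin m → ℝ),
      (∀ l, t l ∈ Set.Ioo (0 : ℝ) 1) ∧ (∀ l, 0 ≤ lam l) ∧ (∑ l, lam l = 1) ∧
      F 1 - ∑ k ∈ Finset.range (n + 1),
          ((k.factorial : ℝ))⁻¹ • iteratedDerivWithin k F (Set.Icc 0 1) 0 =
        ∑ l, lam l • (((1 - t l) ^ n / (n.factorial : ℝ)) •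
          iteratedDerivWithin (n + 1) F (Set.Icc 0 1) (t l)) := by
  subst hdim
  have : Nontrivial E := Module.nontrivial_of_finrank_pos (R := ℝ) hm
  obtain ⟨t, ht, w, ⟨hw₀, hw₁⟩, hslope⟩ := exists_slope_eq_sum_smul_deriv zero_lt_one
    (continuousOn_taylorWithinEval (uniqueDiffOn_Icc zero_lt_one) hF)
    (fun t ht => taylorWithinEval_hasDerivAt_Ioo 1 zero_lt_one ht hF hF')
  refine ⟨t, w, ht, hw₀, hw₁, ?_⟩
  rw [slope_def_module, taylorWithinEval_self, taylor_within_apply] at hslope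
  simpa [div_eq_inv_mul] using hslope
end

section
/- From approximate to strict inequalities through smoothing (Lemma): Let d ≥ 2 and let f be a concave, nonnegative real-valued function on the probability simplex in ℝ^d such that f(p) < f(u_d) for every probability vector p ≠ u_d. Let p, q be probability vectors in ℝ^d, η > 0 with f(p) ≤ f(q) + η, and let ε ∈ (0, 1/2] satisfy ε·( f(u_d) − sup{ f(ρ) : ρ a probability vector in ℝ^d with ‖ρ − u_d‖₁ ≥ ε/2 } ) ≥ 2η. Then f(p) ≤ f(q̃(ε)) − min{η, f(u_d) − f(p)}. -/
/-- A probability vector: nonnegative entries summing to one. -/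
def IsProbVec {d : ℕ} (p : Fin d → ℝ) : Prop :=
  (∀ i, 0 ≤ p i) ∧ ∑ i, p i = 1

/-- ℓ¹ distance between two vectors. -/
def l1Dist {d : ℕ} (p q : Fin d → ℝ) : ℝ :=
  ∑ i, |p i - q i|

/-- The uniform probability vector on `d` outcomes. -/
noncomputable def unif (d : ℕ) : Fin d → ℝ := fun _ => 1 / d

/-- The smoothed vector `q̃(ε)`: the uniform vector if `q` is `ε`-close to uniform in ℓ¹,
otherwise the mixture `(1−ε)q + ε·u_d`. -/
noncomputable def smoothed {d : ℕ} (q : Fin d → ℝ) (ε : ℝ) : Fin d → ℝ :=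
  if l1Dist q (unif d) < ε then unif d else fun i => (1 - ε) * q i + ε * (1 / d)

/-- Rényi entropy `S_α(p) = (1/(1−α)) ln Σᵢ pᵢ^α` (real powers, `0^α = 0` for `α > 0`). -/
noncomputable def renyiEntropy (α : ℝ) {d : ℕ} (p : Fin d → ℝ) : ℝ :=
  (1 - α)⁻¹ * Real.log (∑ i, p i ^ α)

/-- Shannon entropy `S₁(p) = −Σᵢ pᵢ ln pᵢ` (with `0 ln 0 = 0`). -/
noncomputable def shannonEntropy {d : ℕ} (p : Fin d → ℝ) : ℝ :=
  -∑ i, p i * Real.log (p i)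

/-- Min-entropy `S_∞(p) = −ln maxᵢ pᵢ`. -/
noncomputable def minEntropy {d : ℕ} (p : Fin d → ℝ) : ℝ :=
  -Real.log (⨆ i, p i)

/-- Tsallis entropy: `T_α(p) = (1 − Σᵢ pᵢ^α)/(α−1)` for `α ≠ 1`, Shannon entropy at `α = 1`. -/
noncomputable def tsallisEntropy (α : ℝ) {d : ℕ} (p : Fin d → ℝ) : ℝ :=
  if α = 1 then shannonEntropy p else (1 - ∑ i, p i ^ α) / (α - 1)

/-!
Mixing with weight `ε` raises a concave `f` by at least `ε * (f u - f q)`. When `q` is far from `u`,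
its value `f q` is at most the supremum in the hypothesis, so the gain is at least `2 * η`: one `η`
absorbs the error in `f p ≤ f q + η`, and the other remains as the gap. When `q` is close to `u`,
smoothing reaches `u` itself, and the gap `f u - f p` is attained.

The supremum is finite because a concave `f` is bounded on the simplex. It is bounded below by its
values at the vertices. The barycenter is a mixture, with weights independent of `x`, of any given
point `x` and another point of the simplex, so a large `f x` would force a large value there.
-/

section Concave

lemma nonempty_of_mem_stdSimplex {𝕜 ι : Type*} [Semiring 𝕜] [PartialOrder 𝕜] [Nontrivial 𝕜]
    [Fintype ι] {x : ι → 𝕜} (hx : x ∈ stdSimplex 𝕜 ι) : Nonempty ι := by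
  by_contra! hι
  simp only [stdSimplex_of_isEmpty_index, Set.mem_empty_iff_false] at hx

variable {𝕜 E ι : Type*} [Field 𝕜] [LinearOrder 𝕜] [IsStrictOrderedRing 𝕜]

lemma add_mul_sub_le_of_concaveOn [AddCommMonoid E] [SMul 𝕜 E] {s : Set E} {f : E → 𝕜}
    (hf : ConcaveOn 𝕜 s f) {x y : E} (hx : x ∈ s) (hy : y ∈ s) {ε : 𝕜} (hε0 : 0 ≤ ε)
    (hε1 : ε ≤ 1) : f x + ε * (f y - f x) ≤ f ((1 - ε) • x + ε • y) :=
  calc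
    f x + ε * (f y - f x) = (1 - ε) • f x + ε • f y := by simp only [smul_eq_mul]; ring
    _ ≤ f ((1 - ε) • x + ε • y) := hf.2 hx hy (sub_nonneg.2 hε1) hε0 (sub_add_cancel 1 ε)

lemma bddAbove_image_of_concaveOn_of_bddBelow [AddCommMonoid E] [SMul 𝕜 E] {s : Set E}
    {f : E → 𝕜} (hf : ConcaveOn 𝕜 s f) (hbdd : BddBelow (f '' s)) {c : E} {ε : 𝕜} (hε0 : 0 ≤ ε)
    (hε1 : ε < 1) (hc : ∀ x ∈ s, ∃ y ∈ s, (1 - ε) • x + ε • y = c) : BddAbove (f '' s) := by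
  obtain ⟨m, hm⟩ := hbdd
  refine ⟨(f c - ε * m) / (1 - ε), ?_⟩
  rintro _ ⟨x, hx, rfl⟩
  obtain ⟨y, hy, rfl⟩ := hc x hx
  have hgain := add_mul_sub_le_of_concaveOn hf hx hy hε0 hε1.le
  have hmy : ε * m ≤ ε * f y := mul_le_mul_of_nonneg_left (hm ⟨y, hy, rfl⟩) hε0
  rw [le_div_iff₀ (sub_pos.2 hε1)]
  linarith

variable [Fintype ι]

lemma exists_mem_stdSimplex_combo_eq_barycenter [Nonempty ι] {x : ι → 𝕜}
    (hx : x ∈ stdSimplex 𝕜 ι) :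
    ∃ y ∈ stdSimplex 𝕜 ι, (1 - Fintype.card ι / (Fintype.card ι + 1) : 𝕜) • x +
      (Fintype.card ι / (Fintype.card ι + 1) : 𝕜) • y =
        (stdSimplex.barycenter : stdSimplex 𝕜 ι).val := by
  set n : 𝕜 := (Fintype.card ι : 𝕜) with hn
  have hn0 : 0 < n := Nat.cast_pos.2 Fintype.card_pos
  -- `x` gets weight `1 / (n + 1)`: weight `1 / n` would divide by `n - 1`, which may vanish.
  refine ⟨fun i => n⁻¹ * (1 - x i + n⁻¹), ⟨fun i => ?_, ?_⟩, ?_⟩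
  · have hxi : 0 ≤ 1 - x i := sub_nonneg.2 (mem_Icc_of_mem_stdSimplex hx i).2
    positivity
  · rw [← Finset.mul_sum, Finset.sum_add_distrib, Finset.sum_sub_distrib, hx.2]
    simp only [Finset.sum_const, Finset.card_univ, nsmul_eq_mul, ← hn]
    field_simp
    ring
  · ext i
    simp only [Pi.add_apply, Pi.smul_apply, smul_eq_mul, stdSimplex.barycenter_apply, ← hn]
    field_simp
    ring

lemma bddBelow_image_stdSimplex_of_concaveOn {f : (ι → 𝕜) → 𝕜}
    (hf : ConcaveOn 𝕜 (stdSimplex 𝕜 ι) f) : BddBelow (f '' stdSimplex 𝕜 ι) := by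
  classical
  have hvertices := hf.bddBelow_convexHull
    (Set.range_subset_iff.2 fun i => single_mem_stdSimplex 𝕜 i)
    ((Set.finite_range fun i : ι => (Pi.single i 1 : ι → 𝕜)).image f).bddBelow
  rwa [convexHull_rangle_single_eq_stdSimplex] at hvertices

lemma bddAbove_image_stdSimplex_of_concaveOn {f : (ι → 𝕜) → 𝕜}
    (hf : ConcaveOn 𝕜 (stdSimplex 𝕜 ι) f) : BddAbove (f '' stdSimplex 𝕜 ι) := by
  obtain hempty | ⟨x, hx⟩ := (stdSimplex 𝕜 ι).eq_empty_or_nonempty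
  · simp only [hempty, Set.image_empty, bddAbove_empty]
  have : Nonempty ι := nonempty_of_mem_stdSimplex hx
  exact bddAbove_image_of_concaveOn_of_bddBelow hf (bddBelow_image_stdSimplex_of_concaveOn hf)
    (by positivity) ((div_lt_one (by positivity)).2 (lt_add_one _))
    fun _ => exists_mem_stdSimplex_combo_eq_barycenter

end Concave

section Smoothing

variable {d : ℕ} {f : (Fin d → ℝ) → ℝ} {q : Fin d → ℝ} {ε : ℝ}

lemma unif_eq_barycenter [Nonempty (Fin d)] :
    unif d = (stdSimplex.barycenter : stdSimplex ℝ (Fin d)).val := by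
  ext i
  simp only [unif, stdSimplex.barycenter_apply, Fintype.card_fin, one_div]

lemma isProbVec_unif [Nonempty (Fin d)] : IsProbVec (unif d) := by
  rw [unif_eq_barycenter]
  exact stdSimplex.barycenter.2

lemma smoothed_of_lt (h : l1Dist q (unif d) < ε) : smoothed q ε = unif d :=
  if_pos h

lemma smoothed_of_le (h : ε ≤ l1Dist q (unif d)) :
    smoothed q ε = (1 - ε) • q + ε • unif d :=
  if_neg h.not_gt

lemma add_mul_sub_le_map_smoothed (hf : ConcaveOn ℝ (stdSimplex ℝ (Fin d)) f) (hq : IsProbVec q)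
    (hε0 : 0 ≤ ε) (hε1 : ε ≤ 1) (hfar : ε ≤ l1Dist q (unif d)) :
    f q + ε * (f (unif d) - f q) ≤ f (smoothed q ε) := by
  have : Nonempty (Fin d) := nonempty_of_mem_stdSimplex hq
  rw [smoothed_of_le hfar]
  exact add_mul_sub_le_of_concaveOn hf hq isProbVec_unif hε0 hε1

lemma le_sSup_image_of_le_l1Dist (hf : ConcaveOn ℝ (stdSimplex ℝ (Fin d)) f) (hq : IsProbVec q)
    {r : ℝ} (hfar : r ≤ l1Dist q (unif d)) :
    f q ≤ sSup (f '' {ρ : Fin d → ℝ | IsProbVec ρ ∧ r ≤ l1Dist ρ (unif d)}) :=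
  le_csSup ((bddAbove_image_stdSimplex_of_concaveOn hf).mono (Set.image_mono fun _ hρ => hρ.1))
    ⟨q, ⟨hq, hfar⟩, rfl⟩

theorem approx_to_strict_by_smoothing_general (hf : ConcaveOn ℝ (stdSimplex ℝ (Fin d)) f)
    (hq : IsProbVec q) {a η r : ℝ} (haq : a ≤ f q + η) (hε0 : 0 ≤ ε) (hε1 : ε ≤ 1) (hrε : r ≤ ε)
    (hεcond : 2 * η ≤ ε * (f (unif d) -
      sSup (f '' {ρ : Fin d → ℝ | IsProbVec ρ ∧ r ≤ l1Dist ρ (unif d)}))) :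
    a ≤ f (smoothed q ε) - min η (f (unif d) - a) := by
  obtain hnear | hfar := lt_or_ge (l1Dist q (unif d)) ε
  · rw [smoothed_of_lt hnear]
    exact le_sub_comm.1 (min_le_right η (f (unif d) - a))
  · have hgain : f q + 2 * η ≤ f (smoothed q ε) := calc
      f q + 2 * η ≤ f q + ε * (f (unif d) - sSup _) := by gcongr
      _ ≤ f q + ε * (f (unif d) - f q) := by
        gcongr
        exact le_sSup_image_of_le_l1Dist hf hq (hrε.trans hfar)
      _ ≤ f (smoothed q ε) := add_mul_sub_le_map_smoothed hf hq hε0 hε1 hfar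
    linarith [min_le_left η (f (unif d) - a)]

end Smoothing

/-- **From approximate to strict inequalities through smoothing**: for a concave nonnegative
function `f` on the simplex which is uniquely maximised at the uniform distribution, an
approximate inequality `f(p) ≤ f(q) + η` upgrades to a strict gap against the smoothed
vector `q̃(ε)`, provided `ε ∈ (0,1/2]` satisfies the stated condition. -/
theorem approx_to_strict_by_smoothing (d : ℕ) (hd : 2 ≤ d)
    (f : (Fin d → ℝ) → ℝ)
    (hconc : ∀ p q : Fin d → ℝ, IsProbVec p → IsProbVec q → ∀ a b : ℝ,
      0 ≤ a → 0 ≤ b → a + b = 1 → a * f p + b * f q ≤ f (fun i => a * p i + b * q i))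
    (hnonneg : ∀ p : Fin d → ℝ, IsProbVec p → 0 ≤ f p)
    (hmax : ∀ p : Fin d → ℝ, IsProbVec p → p ≠ unif d → f p < f (unif d))
    (p q : Fin d → ℝ) (hp : IsProbVec p) (hq : IsProbVec q)
    (η : ℝ) (hη : 0 < η) (hfpq : f p ≤ f q + η)
    (ε : ℝ) (hε0 : 0 < ε) (hε12 : ε ≤ 1 / 2)
    (hεcond : 2 * η ≤
      ε * (f (unif d) -
        sSup (f '' {ρ : Fin d → ℝ | IsProbVec ρ ∧ ε / 2 ≤ l1Dist ρ (unif d)}))) :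
    f p ≤ f (smoothed q ε) - min η (f (unif d) - f p) :=
  approx_to_strict_by_smoothing_general
    ⟨convex_stdSimplex ℝ (Fin d), fun x hx y hy a b => hconc x y hx hy a b⟩
    hq hfpq hε0.le (hε12.trans one_half_lt_one.le) (half_le_self hε0.le) hεcond
end

section
/- Strict Rényi-entropy gap for non-full-rank distributions (Proposition, part (iii)): Let d ≥ 2, let α ∈ (0,1), let p ∈ ℝ^d be a probability vector that is not of full rank (some entry p_i = 0), and let q ∈ ℝ^d be an arbitrary probability vector. Set ε₀ := ((d−1)/d)^{1/(2α)} and assume ε₀ ≤ 1/2. Then S_α(p) ≤ S_α(q̃(ε₀)) − (1/2)·ln( d/(d−1) ). -/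
/-!
A probability vector supported on `d - 1` outcomes has `S_α ≤ ln (d - 1)`. On the other side,
`∑ᵢ ((1 - ε) qᵢ + ε / d) ^ α` is a concave function of `q`, hence smallest at the vertices of the
simplex, and there Bernoulli's inequality bounds it below by `(d * ε ^ α) ^ (1 - α)` whenever
`d ≤ (d + 1) * ε ^ α`. So smoothing by `ε` forces `S_α ≥ ln (d * ε ^ α)`, which for `ε = ε₀` is
the midpoint of `ln d` and `ln (d - 1)`.
-/

section ScalarInequalities

variable {α : ℝ}

theorem one_add_mul_le_one_add_div_rpow {w : ℝ} (hα0 : 0 < α) (hα1 : α ≤ 1) (hw0 : 0 ≤ w)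
    (hw1 : w ≤ 1) : 1 + α * w ≤ (1 + w / α) ^ α := by
  have hbase : 0 < 1 + w / α := by positivity
  have hbernoulli : (1 + w / α) ^ (1 - α) ≤ 1 + (1 - α) * (w / α) :=
    rpow_one_add_le_one_add_mul_self (by linarith [div_nonneg hw0 hα0.le])
      (by linarith) (by linarith)
  have hpoly : (1 + α * w) * (1 + (1 - α) * (w / α)) ≤ 1 + w / α := by
    have hdiff : 1 + w / α - (1 + α * w) * (1 + (1 - α) * (w / α)) =
        w * (1 - α) * (1 - w) := by
      field_simp
      ring
    have : 0 ≤ w * (1 - α) * (1 - w) :=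
      mul_nonneg (mul_nonneg hw0 (sub_nonneg.2 hα1)) (sub_nonneg.2 hw1)
    linarith
  refine le_of_mul_le_mul_right ?_ (Real.rpow_pos_of_pos hbase (1 - α))
  calc (1 + α * w) * (1 + w / α) ^ (1 - α)
      ≤ (1 + α * w) * (1 + (1 - α) * (w / α)) := by gcongr
    _ ≤ 1 + w / α := hpoly
    _ = (1 + w / α) ^ α * (1 + w / α) ^ (1 - α) := by
      rw [← Real.rpow_add hbase, add_sub_cancel, Real.rpow_one]

theorem one_add_mul_rpow_sub_one_le {c u : ℝ} (hα0 : 0 < α) (hα1 : α ≤ 1) (hc : 0 ≤ c)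
    (hu : 1 ≤ u) (hcu : c * (u - 1) ≤ 1) :
    1 + c * (u ^ α - 1) ≤ (1 + c * (u ^ α⁻¹ - 1)) ^ α := by
  have hw : 0 ≤ c * (u - 1) := mul_nonneg hc (sub_nonneg.2 hu)
  have hupper : u ^ α ≤ 1 + α * (u - 1) := by
    simpa using rpow_one_add_le_one_add_mul_self (s := u - 1) (by linarith) hα0.le hα1
  have hlower : 1 + α⁻¹ * (u - 1) ≤ u ^ α⁻¹ := by
    simpa using one_add_mul_self_le_rpow_one_add (s := u - 1) (by linarith)
      ((one_le_inv₀ hα0).2 hα1)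
  calc 1 + c * (u ^ α - 1)
      ≤ 1 + c * (1 + α * (u - 1) - 1) := by gcongr
    _ = 1 + α * (c * (u - 1)) := by ring
    _ ≤ (1 + c * (u - 1) / α) ^ α := one_add_mul_le_one_add_div_rpow hα0 hα1 hw hcu
    _ = (1 + c * (1 + α⁻¹ * (u - 1) - 1)) ^ α := by ring_nf
    _ ≤ (1 + c * (u ^ α⁻¹ - 1)) ^ α := by
      refine Real.rpow_le_rpow ?_ (by gcongr) hα0.le
      rw [add_sub_cancel_left, mul_left_comm]
      positivity

theorem mul_rpow_rpow_one_sub_le {c ε : ℝ} (hα0 : 0 < α) (hα1 : α ≤ 1) (hc : 0 < c)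
    (hε0 : 0 < ε) (hε1 : ε ≤ 1) (hcε : c ≤ (c + 1) * ε ^ α) :
    (c * ε ^ α) ^ (1 - α) ≤ (c - 1) * (ε / c) ^ α + (1 - ε + ε / c) ^ α := by
  have hεα : 0 < ε ^ α := Real.rpow_pos_of_pos hε0 α
  have hu : 1 ≤ (ε ^ α)⁻¹ := (one_le_inv₀ hεα).2 (Real.rpow_le_one hε0.le hε1 hα0.le)
  have hcu : c * ((ε ^ α)⁻¹ - 1) ≤ 1 := by
    rw [mul_sub_one, sub_le_iff_le_add', ← div_eq_mul_inv, div_le_iff₀ hεα]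
    exact hcε
  have hroot : ((ε ^ α)⁻¹) ^ α⁻¹ = ε⁻¹ := by
    rw [Real.inv_rpow hεα.le, Real.rpow_rpow_inv hε0.le hα0.ne']
  have hvertex : 1 + c * ((ε ^ α)⁻¹ ^ α - 1) ≤ (1 + c * (ε⁻¹ - 1)) ^ α := by
    simpa only [hroot] using one_add_mul_rpow_sub_one_le hα0 hα1 hc.le hu hcu
  have hbase : 0 ≤ 1 + c * (ε⁻¹ - 1) := by
    have : 0 ≤ ε⁻¹ - 1 := sub_nonneg.2 ((one_le_inv₀ hε0).2 hε1)
    positivity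
  calc (c * ε ^ α) ^ (1 - α)
      = (ε / c) ^ α * (c * (ε ^ α)⁻¹ ^ α) := by
        rw [Real.rpow_sub (by positivity), Real.rpow_one, Real.mul_rpow hc.le hεα.le,
          Real.div_rpow hε0.le hc.le, Real.inv_rpow hεα.le]
        field_simp
    _ = (c - 1) * (ε / c) ^ α + (ε / c) ^ α * (1 + c * ((ε ^ α)⁻¹ ^ α - 1)) := by ring
    _ ≤ (c - 1) * (ε / c) ^ α + (ε / c) ^ α * (1 + c * (ε⁻¹ - 1)) ^ α := by gcongr
    _ = (c - 1) * (ε / c) ^ α + (1 - ε + ε / c) ^ α := by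
      rw [← Real.mul_rpow (by positivity) hbase]
      congr 2
      field_simp
      ring

theorem le_add_one_mul_sqrt_sub_one_div {x : ℝ} (hx : 2 ≤ x) :
    x ≤ (x + 1) * √((x - 1) / x) := by
  rw [← div_le_iff₀' (by linarith)]
  apply Real.le_sqrt_of_sq_le
  rw [div_pow, div_le_div_iff₀ (by positivity) (by linarith)]
  nlinarith

end ScalarInequalities

theorem sum_rpow_le_card_rpow_mul_rpow_sum {ι : Type*} {s : Finset ι} {f : ι → ℝ} {α : ℝ}
    (hf : ∀ i ∈ s, 0 ≤ f i) (hα0 : 0 ≤ α) (hα1 : α ≤ 1) :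
    ∑ i ∈ s, f i ^ α ≤ (s.card : ℝ) ^ (1 - α) * (∑ i ∈ s, f i) ^ α := by
  rcases s.eq_empty_or_nonempty with rfl | hs
  · simp only [Finset.sum_empty]
    positivity
  have hcard : (0 : ℝ) < s.card := by exact_mod_cast hs.card_pos
  have hjensen := (Real.concaveOn_rpow hα0 hα1).le_map_sum (t := s)
    (w := fun _ => (s.card : ℝ)⁻¹) (p := f) (fun _ _ => by positivity)
    (by simp [hcard.ne']) hf
  simp only [smul_eq_mul, ← Finset.mul_sum] at hjensen
  rw [Real.mul_rpow (by positivity) (Finset.sum_nonneg hf), Real.inv_rpow hcard.le,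
    inv_mul_le_iff₀ hcard] at hjensen
  rwa [Real.rpow_sub hcard, Real.rpow_one, div_eq_mul_inv, mul_assoc]

section RenyiEntropy

variable {d : ℕ} {α : ℝ} {p q : Fin d → ℝ}

theorem log_le_renyiEntropy {x : ℝ} (hα1 : α < 1) (hx : 0 < x)
    (h : x ^ (1 - α) ≤ ∑ i, p i ^ α) : Real.log x ≤ renyiEntropy α p := by
  rw [renyiEntropy, le_inv_mul_iff₀ (sub_pos.2 hα1), ← Real.log_rpow hx]
  exact Real.log_le_log (by positivity) h

theorem renyiEntropy_le_log {x : ℝ} (hα1 : α < 1) (hx : 0 < x) (hp : 0 < ∑ i, p i ^ α)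
    (h : ∑ i, p i ^ α ≤ x ^ (1 - α)) : renyiEntropy α p ≤ Real.log x := by
  rw [renyiEntropy, inv_mul_le_iff₀ (sub_pos.2 hα1), ← Real.log_rpow hx]
  exact Real.log_le_log hp h

theorem sum_unif_rpow (hd : 0 < d) : ∑ i, unif d i ^ α = (d : ℝ) ^ (1 - α) := by
  have hd' : (0 : ℝ) < d := by exact_mod_cast hd
  simp only [unif, Finset.sum_const, Finset.card_univ, Fintype.card_fin, nsmul_eq_mul]
  rw [one_div, Real.inv_rpow hd'.le, Real.rpow_sub hd', Real.rpow_one, div_eq_mul_inv]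

namespace IsProbVec

theorem exists_pos (hp : IsProbVec p) : ∃ i, 0 < p i := by
  by_contra! hle
  linarith [hp.2, Finset.sum_nonpos fun i (_ : i ∈ Finset.univ) => hle i]

theorem dim_pos (hp : IsProbVec p) : 0 < d :=
  let ⟨i, _⟩ := hp.exists_pos
  i.pos

theorem two_le_dim (hp : IsProbVec p) {j : Fin d} (hj : p j = 0) : 2 ≤ d := by
  obtain ⟨i, hi⟩ := hp.exists_pos
  have hij : i ≠ j := fun h => hi.ne' (h ▸ hj)
  exact Fintype.card_fin d ▸ Fintype.one_lt_card_iff.2 ⟨i, j, hij⟩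

theorem le_one (hp : IsProbVec p) (i : Fin d) : p i ≤ 1 :=
  hp.2 ▸ Finset.single_le_sum (fun j _ => hp.1 j) (Finset.mem_univ i)

theorem sum_rpow_pos (hp : IsProbVec p) : 0 < ∑ i, p i ^ α :=
  let ⟨i, hi⟩ := hp.exists_pos
  Finset.sum_pos' (fun j _ => Real.rpow_nonneg (hp.1 j) α)
    ⟨i, Finset.mem_univ i, Real.rpow_pos_of_pos hi α⟩

theorem renyiEntropy_le_log_card (hp : IsProbVec p) (hα0 : 0 < α) (hα1 : α < 1)
    {s : Finset (Fin d)} (hs : ∀ i ∉ s, p i = 0) :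
    renyiEntropy α p ≤ Real.log s.card := by
  obtain ⟨i, hi⟩ := hp.exists_pos
  have hmem : i ∈ s := by_contra fun h => hi.ne' (hs i h)
  have hcard : (0 : ℝ) < s.card := by exact_mod_cast Finset.card_pos.2 ⟨i, hmem⟩
  have hsum : ∑ i ∈ s, p i = 1 := by
    rw [Finset.sum_subset s.subset_univ fun i _ hi => hs i hi, hp.2]
  have hsum_rpow : ∑ i ∈ s, p i ^ α = ∑ i, p i ^ α :=
    Finset.sum_subset s.subset_univ fun i _ hi => by rw [hs i hi, Real.zero_rpow hα0.ne']
  refine renyiEntropy_le_log hα1 hcard hp.sum_rpow_pos ?_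
  simpa only [hsum, hsum_rpow, Real.one_rpow, mul_one] using
    sum_rpow_le_card_rpow_mul_rpow_sum (fun i (_ : i ∈ s) => hp.1 i) hα0.le hα1.le

theorem renyiEntropy_le_log_dim_sub_one (hp : IsProbVec p) (hα0 : 0 < α) (hα1 : α < 1)
    {j : Fin d} (hj : p j = 0) : renyiEntropy α p ≤ Real.log ((d : ℝ) - 1) := by
  have hcard : ((Finset.univ.erase j).card : ℝ) = d - 1 := by
    rw [Finset.card_erase_of_mem (Finset.mem_univ j), Finset.card_fin, Nat.cast_pred j.pos]
  rw [← hcard]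
  exact hp.renyiEntropy_le_log_card hα0 hα1 fun i hi => by simp_all

theorem dim_sub_one_mul_add_le_sum_of_concaveOn (hq : IsProbVec q) {φ : ℝ → ℝ} {S : Set ℝ}
    (hφ : ConcaveOn ℝ S φ) {a b : ℝ} (ha : a ∈ S) (hb : b ∈ S) :
    ((d : ℝ) - 1) * φ a + φ b ≤ ∑ i, φ ((1 - q i) * a + q i * b) :=
  calc ((d : ℝ) - 1) * φ a + φ b
      = ∑ i, ((1 - q i) * φ a + q i * φ b) := by
        simp [Finset.sum_add_distrib, ← Finset.sum_mul, hq.2]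
    _ ≤ ∑ i, φ ((1 - q i) * a + q i * b) := Finset.sum_le_sum fun i _ =>
        hφ.2 ha hb (sub_nonneg.2 (hq.le_one i)) (hq.1 i) (sub_add_cancel 1 (q i))

theorem le_sum_mixture_rpow (hq : IsProbVec q) (hα0 : 0 ≤ α) (hα1 : α ≤ 1) {ε : ℝ}
    (hε0 : 0 ≤ ε) (hε1 : ε ≤ 1) :
    ((d : ℝ) - 1) * (ε / d) ^ α + (1 - ε + ε / d) ^ α ≤
      ∑ i, ((1 - ε) * q i + ε * (1 / d)) ^ α := by
  have hεd : 0 ≤ ε / d := by positivity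
  refine (hq.dim_sub_one_mul_add_le_sum_of_concaveOn (Real.concaveOn_rpow hα0 hα1)
    (Set.mem_Ici.2 hεd) (Set.mem_Ici.2 (by linarith))).trans_eq ?_
  refine Finset.sum_congr rfl fun i _ => ?_
  ring_nf

theorem log_le_renyiEntropy_smoothed (hq : IsProbVec q) (hα0 : 0 < α) (hα1 : α < 1) {ε : ℝ}
    (hε0 : 0 < ε) (hε1 : ε ≤ 1) (hdε : (d : ℝ) ≤ (d + 1) * ε ^ α) :
    Real.log (d * ε ^ α) ≤ renyiEntropy α (smoothed q ε) := by
  have hd : (0 : ℝ) < d := by exact_mod_cast hq.dim_pos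
  refine log_le_renyiEntropy hα1 (by positivity) ?_
  unfold smoothed
  split_ifs
  · rw [sum_unif_rpow hq.dim_pos]
    have hle : d * ε ^ α ≤ d :=
      mul_le_of_le_one_right hd.le (Real.rpow_le_one hε0.le hε1 hα0.le)
    exact Real.rpow_le_rpow (by positivity) hle (sub_nonneg.2 hα1.le)
  · exact (mul_rpow_rpow_one_sub_le hα0 hα1.le hd hε0 hε1 hdε).trans
      (hq.le_sum_mixture_rpow hα0.le hα1.le hε0.le hε1)

end IsProbVec

end RenyiEntropy

theorem strict_renyi_gap_not_full_rank_general (d : ℕ) (α : ℝ) (hα0 : 0 < α) (hα1 : α < 1)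
    (p q : Fin d → ℝ) (hp : IsProbVec p) (hq : IsProbVec q) (hrank : ∃ i, p i = 0)
    (ε₀ : ℝ) (hε₀ : ε₀ = (((d : ℝ) - 1) / d) ^ (1 / (2 * α))) :
    renyiEntropy α p ≤ renyiEntropy α (smoothed q ε₀) -
      (1 / 2) * Real.log ((d : ℝ) / ((d : ℝ) - 1)) := by
  obtain ⟨j, hj⟩ := hrank
  have hd : (2 : ℝ) ≤ d := by exact_mod_cast hp.two_le_dim hj
  have hd1 : 0 < (d : ℝ) - 1 := by linarith
  have hratio : 0 < ((d : ℝ) - 1) / d := by positivity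
  have hε0 : 0 < ε₀ := hε₀ ▸ Real.rpow_pos_of_pos hratio _
  have hε1 : ε₀ ≤ 1 := hε₀ ▸
    Real.rpow_le_one hratio.le (div_le_one_of_le₀ (by linarith) (by linarith)) (by positivity)
  have hε₀α : ε₀ ^ α = √(((d : ℝ) - 1) / d) := by
    rw [hε₀, ← Real.rpow_mul hratio.le, Real.sqrt_eq_rpow]
    congr 1
    field_simp
  have hupper := hp.renyiEntropy_le_log_dim_sub_one hα0 hα1 hj
  have hlower := hq.log_le_renyiEntropy_smoothed hα0 hα1 hε0 hε1
    (hε₀α ▸ le_add_one_mul_sqrt_sub_one_div hd)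
  rw [hε₀α, Real.log_mul (by positivity) (by positivity), Real.log_sqrt hratio.le,
    Real.log_div hd1.ne' (by positivity)] at hlower
  rw [Real.log_div (by positivity) hd1.ne']
  linarith

/-- Strict Rényi-entropy gap for non-full-rank distributions: for `α ∈ (0,1)`, a probability
vector `p` with a zero entry, and any probability vector `q`, with
`ε₀ = ((d−1)/d)^{1/(2α)} ≤ 1/2` one has `S_α(p) ≤ S_α(q̃(ε₀)) − (1/2)ln(d/(d−1))`. -/
theorem strict_renyi_gap_not_full_rank (d : ℕ) (hd : 2 ≤ d)
    (α : ℝ) (hα0 : 0 < α) (hα1 : α < 1)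
    (p q : Fin d → ℝ) (hp : IsProbVec p) (hq : IsProbVec q)
    (hrank : ∃ i, p i = 0)
    (ε₀ : ℝ) (hε₀ : ε₀ = (((d : ℝ) - 1) / d) ^ (1 / (2 * α))) (hε12 : ε₀ ≤ 1 / 2) :
    renyiEntropy α p ≤ renyiEntropy α (smoothed q ε₀) -
      (1 / 2) * Real.log ((d : ℝ) / ((d : ℝ) - 1)) :=
  strict_renyi_gap_not_full_rank_general d α hα0 hα1 p q hp hq hrank ε₀ hε₀
end

section
/- Uniform continuity of the Tsallis entropy away from α = 1 (Theorem, part 0): Let d ≥ 1 and let p, p' ∈ ℝ^d be probability vectors. Then for every α ∈ (0,1) ∪ (1,∞), |T_α(p) − T_α(p')| ≤ (2·⌈α⌉/|α−1|) · d^{1 − α/⌈α⌉} · (‖p − p'‖₁)^{α/⌈α⌉}, where ⌈α⌉ is the least integer that is ≥ α. -/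
/-! Write `n = ⌈α⌉` and `β = α / n ≤ 1`, so that `x ^ α = (x ^ β) ^ n`. On `[0, 1]` the map
`t ↦ t ^ n` is `n`-Lipschitz and `t ↦ t ^ β` is `β`-Hölder with constant one, hence
`|x ^ α - y ^ α| ≤ n * |x - y| ^ β`. Summing over the coordinates, Jensen's inequality for the
concave map `t ↦ t ^ β` turns `∑ i, |p i - p' i| ^ β` into a power of the `ℓ¹` distance, at the
cost of the factor `d ^ (1 - β)`. -/

theorem abs_pow_sub_pow_le_of_abs_le_one {R : Type*} [CommRing R] [LinearOrder R]
    [IsOrderedRing R] {a b : R} (ha : |a| ≤ 1) (hb : |b| ≤ 1) (n : ℕ) :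
    |a ^ n - b ^ n| ≤ n * |a - b| :=
  calc |a ^ n - b ^ n| ≤ |a - b| * n * max |a| |b| ^ (n - 1) :=
      abs_pow_sub_pow_le a b n
    _ ≤ |a - b| * n :=
      mul_le_of_le_one_right (by positivity) (pow_le_one₀ (by positivity) (max_le ha hb))
    _ = n * |a - b| := mul_comm _ _

section Rpow

variable {β : ℝ}

theorem abs_rpow_sub_rpow_le_abs_sub_rpow {x y : ℝ} (hx : 0 ≤ x) (hy : 0 ≤ y) (hβ : 0 ≤ β)
    (hβ1 : β ≤ 1) : |x ^ β - y ^ β| ≤ |x - y| ^ β := by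
  wlog h : y ≤ x generalizing x y
  · rw [abs_sub_comm, abs_sub_comm x]
    exact this hy hx (le_of_not_ge h)
  have hsub : 0 ≤ x - y := sub_nonneg.2 h
  have hmono : y ^ β ≤ x ^ β := Real.rpow_le_rpow hy h hβ
  rw [abs_of_nonneg (sub_nonneg.2 hmono), abs_of_nonneg hsub, sub_le_iff_le_add]
  simpa only [sub_add_cancel] using Real.rpow_add_le_add_rpow hsub hy hβ hβ1

theorem abs_rpow_mul_natCast_sub_le {x y : ℝ} (hx : x ∈ Set.Icc 0 1) (hy : y ∈ Set.Icc 0 1)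
    (hβ : 0 ≤ β) (hβ1 : β ≤ 1) (n : ℕ) :
    |x ^ (β * n) - y ^ (β * n)| ≤ n * |x - y| ^ β := by
  have abs_rpow_le_one {z : ℝ} (hz : z ∈ Set.Icc 0 1) : |z ^ β| ≤ 1 := by
    rw [abs_of_nonneg (Real.rpow_nonneg hz.1 β)]
    exact Real.rpow_le_one hz.1 hz.2 hβ
  calc |x ^ (β * n) - y ^ (β * n)| = |(x ^ β) ^ n - (y ^ β) ^ n| := by
        rw [Real.rpow_mul_natCast hx.1, Real.rpow_mul_natCast hy.1]
    _ ≤ n * |x ^ β - y ^ β| :=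
        abs_pow_sub_pow_le_of_abs_le_one (abs_rpow_le_one hx) (abs_rpow_le_one hy) n
    _ ≤ n * |x - y| ^ β := by
        gcongr
        exact abs_rpow_sub_rpow_le_abs_sub_rpow hx.1 hy.1 hβ hβ1

variable {ι : Type*} {s : Finset ι} {f g : ι → ℝ}

theorem sum_rpow_le_card_rpow_mul_sum_rpow (hf : ∀ i ∈ s, 0 ≤ f i) (hβ : 0 ≤ β)
    (hβ1 : β ≤ 1) : ∑ i ∈ s, f i ^ β ≤ (s.card : ℝ) ^ (1 - β) * (∑ i ∈ s, f i) ^ β := by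
  obtain rfl | hs := s.eq_empty_or_nonempty
  · rw [Finset.sum_empty]
    positivity
  have hcard : (0 : ℝ) < s.card := Nat.cast_pos.2 hs.card_pos
  have hsum : 0 ≤ ∑ i ∈ s, f i := Finset.sum_nonneg hf
  have jensen : (s.card : ℝ)⁻¹ * ∑ i ∈ s, f i ^ β ≤ ((s.card : ℝ)⁻¹ * ∑ i ∈ s, f i) ^ β := by
    have weights_sum : ∑ _i ∈ s, (s.card : ℝ)⁻¹ = 1 := by
      rw [Finset.sum_const, nsmul_eq_mul, mul_inv_cancel₀ hcard.ne']
    simpa only [smul_eq_mul, ← Finset.mul_sum] using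
      (Real.concaveOn_rpow hβ hβ1).le_map_sum (fun _ _ => inv_nonneg.2 hcard.le) weights_sum hf
  calc ∑ i ∈ s, f i ^ β ≤ s.card * ((s.card : ℝ)⁻¹ * ∑ i ∈ s, f i) ^ β :=
        (inv_mul_le_iff₀ hcard).1 jensen
    _ = (s.card : ℝ) ^ (1 - β) * (∑ i ∈ s, f i) ^ β := by
        rw [Real.mul_rpow (inv_nonneg.2 hcard.le) hsum, Real.inv_rpow hcard.le,
          Real.rpow_sub hcard, Real.rpow_one, div_eq_mul_inv, mul_assoc]

theorem abs_sum_rpow_mul_natCast_sub_le (hf : ∀ i ∈ s, f i ∈ Set.Icc 0 1)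
    (hg : ∀ i ∈ s, g i ∈ Set.Icc 0 1) (hβ : 0 ≤ β) (hβ1 : β ≤ 1) (n : ℕ) :
    |∑ i ∈ s, f i ^ (β * n) - ∑ i ∈ s, g i ^ (β * n)| ≤
      n * ((s.card : ℝ) ^ (1 - β) * (∑ i ∈ s, |f i - g i|) ^ β) :=
  calc |∑ i ∈ s, f i ^ (β * n) - ∑ i ∈ s, g i ^ (β * n)|
      ≤ ∑ i ∈ s, |f i ^ (β * n) - g i ^ (β * n)| := by
        rw [← Finset.sum_sub_distrib]
        exact Finset.abs_sum_le_sum_abs _ _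
    _ ≤ ∑ i ∈ s, n * |f i - g i| ^ β :=
        Finset.sum_le_sum fun i hi => abs_rpow_mul_natCast_sub_le (hf i hi) (hg i hi) hβ hβ1 n
    _ = n * ∑ i ∈ s, |f i - g i| ^ β := (Finset.mul_sum ..).symm
    _ ≤ n * ((s.card : ℝ) ^ (1 - β) * (∑ i ∈ s, |f i - g i|) ^ β) := by
        gcongr
        exact sum_rpow_le_card_rpow_mul_sum_rpow (fun _ _ => abs_nonneg _) hβ hβ1

end Rpow

section Tsallis

variable {d : ℕ}

theorem IsProbVec.mem_Icc {p : Fin d → ℝ} (hp : IsProbVec p) (i : Fin d) :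
    p i ∈ Set.Icc 0 1 :=
  ⟨hp.1 i, hp.2 ▸ Finset.single_le_sum (fun j _ => hp.1 j) (Finset.mem_univ i)⟩

theorem l1Dist_nonneg (p q : Fin d → ℝ) : 0 ≤ l1Dist p q :=
  Finset.sum_nonneg fun _ _ => abs_nonneg _

theorem abs_tsallisEntropy_sub_tsallisEntropy {α : ℝ} (hα1 : α ≠ 1) (p q : Fin d → ℝ) :
    |tsallisEntropy α p - tsallisEntropy α q| =
      |∑ i, p i ^ α - ∑ i, q i ^ α| / |α - 1| := by
  rw [tsallisEntropy, tsallisEntropy, if_neg hα1, if_neg hα1, ← sub_div, abs_div,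
    sub_sub_sub_cancel_left, abs_sub_comm]

theorem tsallis_continuity_general (p p' : Fin d → ℝ) (hp : ∀ i, p i ∈ Set.Icc 0 1)
    (hp' : ∀ i, p' i ∈ Set.Icc 0 1) {α : ℝ} (hα : 0 < α) (hα1 : α ≠ 1) :
    |tsallisEntropy α p - tsallisEntropy α p'| ≤
      ((⌈α⌉₊ : ℝ) / |α - 1|) * (d : ℝ) ^ (1 - α / (⌈α⌉₊ : ℝ)) *
        (l1Dist p p') ^ (α / (⌈α⌉₊ : ℝ)) := by
  have hn : (0 : ℝ) < ⌈α⌉₊ := Nat.cast_pos.2 (Nat.ceil_pos.2 hα)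
  have hβ : 0 ≤ α / (⌈α⌉₊ : ℝ) := by positivity
  have hβ1 : α / (⌈α⌉₊ : ℝ) ≤ 1 := (div_le_one hn).2 (Nat.le_ceil α)
  have power_sums := abs_sum_rpow_mul_natCast_sub_le (s := Finset.univ) (fun i _ => hp i)
    (fun i _ => hp' i) hβ hβ1 ⌈α⌉₊
  rw [div_mul_cancel₀ α hn.ne', Finset.card_fin] at power_sums
  rw [abs_tsallisEntropy_sub_tsallisEntropy hα1, mul_assoc, div_mul_eq_mul_div]
  exact div_le_div_of_nonneg_right power_sums (abs_nonneg _)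

end Tsallis

/-- Uniform continuity of the Tsallis entropy away from `α = 1`:
`|T_α(p) − T_α(p')| ≤ (2⌈α⌉/|α−1|) d^{1−α/⌈α⌉} ‖p−p'‖₁^{α/⌈α⌉}`. -/
theorem tsallis_continuity (d : ℕ) (hd : 1 ≤ d)
    (p p' : Fin d → ℝ) (hp : IsProbVec p) (hp' : IsProbVec p')
    (α : ℝ) (hα : 0 < α) (hα1 : α ≠ 1) :
    |tsallisEntropy α p - tsallisEntropy α p'| ≤
      (2 * (⌈α⌉₊ : ℝ) / |α - 1|) * (d : ℝ) ^ (1 - α / (⌈α⌉₊ : ℝ)) *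
        (l1Dist p p') ^ (α / (⌈α⌉₊ : ℝ)) := by
  refine (tsallis_continuity_general p p' hp.mem_Icc hp'.mem_Icc hα hα1).trans ?_
  have := l1Dist_nonneg p p'
  gcongr
  linarith [Nat.cast_nonneg (α := ℝ) ⌈α⌉₊]
end

section
/- Hellinger divergence dominates α times the Kullback–Leibler divergence for binary distributions relative to the uniform distribution (Lemma): For every α ∈ [0,1) and every δ ∈ (0,1), ((1+δ)^α + (1−δ)^α − 2)/(α−1) ≥ α·( (1+δ)·ln(1+δ) + (1−δ)·ln(1−δ) ). (Equivalently, for the binary probability vector p = ((1+δ)/2, (1−δ)/2) one has 𝓗_α(p | u_2) ≥ α·D(p | u_2), where 𝓗_α is the Hellinger divergence and D the Kullback–Leibler divergence.) -/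
/-!
`𝓗_α - α D` is the `f`-divergence with generator `φ x = (x ^ α - 1) / (α - 1) - α x log x`, and
against the uniform binary distribution the claim becomes `0 ≤ φ (1 + δ) + φ (1 - δ)`. This
symmetric sum vanishes at `δ = 0`, and with `β = α - 1 < 0` its derivative in `δ` is
`α * ((a ^ β - b ^ β) / β - (log a - log b))`, where `a = 1 + δ` and `b = 1 - δ`. Since
`a * b = 1 - δ ^ 2 ≤ 1`, the interval from `β log a` to `β log b` has nonnegative midpoint, so the
mean of the convex function `exp` over it is at least `1`; hence the derivative is nonnegative.
-/

theorem sub_le_exp_sub_exp {a b : ℝ} (hab : a ≤ b) (hadd : 0 ≤ a + b) :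
    b - a ≤ Real.exp b - Real.exp a := by
  have hsinh : (b - a) / 2 ≤ Real.sinh ((b - a) / 2) := Real.self_le_sinh_iff.mpr (by linarith)
  have hexp : 1 ≤ Real.exp ((a + b) / 2) := Real.one_le_exp (by linarith)
  calc
    b - a ≤ 2 * Real.sinh ((b - a) / 2) := by linarith
    _ ≤ Real.exp ((a + b) / 2) * (2 * Real.sinh ((b - a) / 2)) :=
      le_mul_of_one_le_left (by linarith) hexp
    _ = Real.exp ((a + b) / 2 + (b - a) / 2) - Real.exp ((a + b) / 2 + -((b - a) / 2)) := by
      rw [Real.sinh_eq, Real.exp_add, Real.exp_add]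
      ring
    _ = Real.exp b - Real.exp a := by ring_nf

theorem log_sub_log_le_rpow_sub_rpow_div {a b β : ℝ} (hb : 0 < b) (hba : b ≤ a)
    (hmul : a * b ≤ 1) (hβ : β < 0) :
    Real.log a - Real.log b ≤ (a ^ β - b ^ β) / β := by
  have ha : 0 < a := hb.trans_le hba
  have hlog : Real.log b ≤ Real.log a := Real.log_le_log hb hba
  have hlog_add : Real.log a + Real.log b ≤ 0 := by
    rw [← Real.log_mul ha.ne' hb.ne']
    exact Real.log_nonpos (mul_pos ha hb).le hmul
  have hexp := sub_le_exp_sub_exp (a := Real.log a * β) (b := Real.log b * β)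
    (mul_le_mul_of_nonpos_right hlog hβ.le)
    (by rw [← add_mul]; exact mul_nonneg_of_nonpos_of_nonpos hlog_add hβ.le)
  rw [← Real.rpow_def_of_pos ha, ← Real.rpow_def_of_pos hb] at hexp
  rw [le_div_iff_of_neg hβ]
  linarith

/-- The generator `φ` of the `f`-divergence `∑ i, q i * φ (p i / q i) = 𝓗_α(p|q) - α * D(p|q)`,
normalized so that `φ 1 = 0`. -/
noncomputable def hellingerSubKLGenerator (α x : ℝ) : ℝ :=
  (x ^ α - 1) / (α - 1) - α * (x * Real.log x)

theorem hellingerSubKLGenerator_one (α : ℝ) : hellingerSubKLGenerator α 1 = 0 := by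
  simp [hellingerSubKLGenerator]

theorem continuous_hellingerSubKLGenerator {α : ℝ} (hα : 0 ≤ α) :
    Continuous (hellingerSubKLGenerator α) :=
  (((Real.continuous_rpow_const hα).sub continuous_const).div_const _).sub
    (Real.continuous_mul_log.const_mul α)

theorem hasDerivAt_hellingerSubKLGenerator (α : ℝ) {x : ℝ} (hx : x ≠ 0) :
    HasDerivAt (hellingerSubKLGenerator α)
      (α * (x ^ (α - 1) / (α - 1) - (Real.log x + 1))) x := by
  have hrpow := ((Real.hasDerivAt_rpow_const (p := α) (.inl hx)).sub_const 1).div_const (α - 1)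
  have hmul_log := (Real.hasDerivAt_mul_log hx).const_mul α
  exact (hrpow.sub hmul_log).congr_deriv (by ring)

theorem monotoneOn_hellingerSubKLGenerator_one_add_add_one_sub {α : ℝ} (hα0 : 0 ≤ α)
    (hα1 : α < 1) :
    MonotoneOn
      (fun t ↦ hellingerSubKLGenerator α (1 + t) + hellingerSubKLGenerator α (1 - t))
      (Set.Icc 0 1) := by
  have hcont := continuous_hellingerSubKLGenerator hα0
  refine monotoneOn_of_hasDerivWithinAt_nonneg (convex_Icc 0 1)
    (f' := fun t ↦ α * ((1 + t) ^ (α - 1) / (α - 1) - (Real.log (1 + t) + 1)) -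
      α * ((1 - t) ^ (α - 1) / (α - 1) - (Real.log (1 - t) + 1)))
    (by fun_prop) (fun t ht ↦ ?_) (fun t ht ↦ ?_) <;>
    obtain ⟨ht0, ht1⟩ : 0 < t ∧ t < 1 := by rwa [interior_Icc] at ht
  · have hadd := (hasDerivAt_hellingerSubKLGenerator α
      (by linarith : 1 + t ≠ 0)).comp_const_add 1 t
    have hsub := (hasDerivAt_hellingerSubKLGenerator α
      (by linarith : 1 - t ≠ 0)).comp_const_sub 1 t
    exact (hadd.add hsub).hasDerivWithinAt
  · have hlog := log_sub_log_le_rpow_sub_rpow_div (a := 1 + t) (b := 1 - t) (β := α - 1)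
      (by linarith) (by linarith) (by nlinarith) (by linarith)
    rw [sub_div] at hlog
    rw [← mul_sub]
    exact mul_nonneg hα0 (by linarith)

theorem hellingerSubKLGenerator_one_add_add_one_sub_nonneg {α δ : ℝ} (hα0 : 0 ≤ α)
    (hα1 : α < 1) (hδ : |δ| ≤ 1) :
    0 ≤ hellingerSubKLGenerator α (1 + δ) + hellingerSubKLGenerator α (1 - δ) := by
  have habs : 0 ≤ hellingerSubKLGenerator α (1 + |δ|) + hellingerSubKLGenerator α (1 - |δ|) := by
    simpa [hellingerSubKLGenerator_one] using
      monotoneOn_hellingerSubKLGenerator_one_add_add_one_sub hα0 hα1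
        (Set.left_mem_Icc.mpr zero_le_one) ⟨abs_nonneg δ, hδ⟩ (abs_nonneg δ)
  rcases abs_choice δ with h | h <;> rw [h] at habs
  · exact habs
  · rwa [sub_neg_eq_add, ← sub_eq_add_neg, add_comm] at habs

theorem hellinger_ge_alpha_mul_KL_general {α δ : ℝ} (hα0 : 0 ≤ α) (hα1 : α < 1) (hδ : |δ| ≤ 1) :
    α * ((1 + δ) * Real.log (1 + δ) + (1 - δ) * Real.log (1 - δ)) ≤
      ((1 + δ) ^ α + (1 - δ) ^ α - 2) / (α - 1) := by
  rw [← sub_nonneg]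
  calc
    0 ≤ hellingerSubKLGenerator α (1 + δ) + hellingerSubKLGenerator α (1 - δ) :=
      hellingerSubKLGenerator_one_add_add_one_sub_nonneg hα0 hα1 hδ
    _ = _ := by
      unfold hellingerSubKLGenerator
      ring

/-- Hellinger divergence dominates `α` times the Kullback–Leibler divergence for binary
distributions relative to the uniform one: for `α ∈ [0,1)` and `δ ∈ (0,1)`,
`((1+δ)^α + (1−δ)^α − 2)/(α−1) ≥ α((1+δ)ln(1+δ) + (1−δ)ln(1−δ))`. -/
theorem hellinger_ge_alpha_mul_KL (α δ : ℝ) (hα0 : 0 ≤ α) (hα1 : α < 1)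
    (hδ0 : 0 < δ) (hδ1 : δ < 1) :
    α * ((1 + δ) * Real.log (1 + δ) + (1 - δ) * Real.log (1 - δ)) ≤
      ((1 + δ) ^ α + (1 - δ) ^ α - 2) / (α - 1) :=
  hellinger_ge_alpha_mul_KL_general hα0 hα1 (abs_le.mpr ⟨by linarith, hδ1.le⟩)
end
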